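/- arXiv:2201.02410 — 4 statements merged into one kernel-verified Lean document; each statement's English description precedes it below -/
import Mathlib

section
/- The total payment made to the winning workers never exceeds the budget: ∑_{i∈S} p_i ≤ B. -/
open Finset

theorem budget_feasibility_general {ι 𝕜 : Type*}
    [Semifield 𝕜] [LinearOrder 𝕜] [IsStrictOrderedRing 𝕜]
    {S : Finset ι} {Re p : ι → 𝕜} {B ρ : 𝕜} (hB : 0 ≤ B)
    (hRe : ∀ i ∈ S, 0 ≤ Re i) (hρ : ρ ≤ B / ∑ i ∈ S, Re i)
    (hp : ∀ i ∈ S, p i ≤ Re i * ρ) :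
    ∑ i ∈ S, p i ≤ B :=
  calc
    ∑ i ∈ S, p i ≤ ∑ i ∈ S, Re i * ρ := sum_le_sum hp
    _ = ρ * ∑ i ∈ S, Re i := by rw [← sum_mul, mul_comm]
    -- When `∑ i ∈ S, Re i = 0` the left side is `0`, whatever value `B / 0` is given.
    _ ≤ B := mul_le_of_le_div₀ hB (sum_nonneg hRe) hρ

/-- **Budget feasibility.** Workers are indexed `1, …, n` in nondecreasing order of cost
density `b i / Re i`.  The winning set is `S = {1, …, k}` with `k < n` the largest index
such that `b i / Re i ≤ B / ∑_{j=1}^{i} Re j` for every `i ≤ k`.  With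
`ρ* = min (b (k+1) / Re (k+1)) (B / ∑_{j∈S} Re j)`, payment upper bound
`p_i^up = Re i * ρ*`, internal reputations `re i ∈ (0,1]`, temporary reward
`p_i' = max (B * re i / ∑_{j∈S} re j) (ρ* * re i)` and final payment
`p i = min (p_i^up) (p_i')`, the total payment to the winners never exceeds the
budget: `∑_{i∈S} p i ≤ B`. -/
theorem budget_feasibility
    (n k : ℕ) (hkn : k < n)
    (B : ℝ) (hB : 0 < B)
    (Re b re p : ℕ → ℝ)
    (hRe : ∀ i, 1 ≤ i → i ≤ n → 0 < Re i)
    (hb : ∀ i, 1 ≤ i → i ≤ n → 0 < b i)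
    (hsorted : ∀ i j, 1 ≤ i → i ≤ j → j ≤ n → b i / Re i ≤ b j / Re j)
    (hsel : ∀ i, 1 ≤ i → i ≤ k → b i / Re i ≤ B / ∑ j ∈ Finset.Icc 1 i, Re j)
    (hmax : ¬ (b (k + 1) / Re (k + 1) ≤ B / ∑ j ∈ Finset.Icc 1 (k + 1), Re j))
    (hre : ∀ i, 1 ≤ i → i ≤ k → 0 < re i ∧ re i ≤ 1)
    (ρstar : ℝ)
    (hρ : ρstar = min (b (k + 1) / Re (k + 1)) (B / ∑ j ∈ Finset.Icc 1 k, Re j))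
    (hp : ∀ i, 1 ≤ i → i ≤ k →
      p i = min (Re i * ρstar)
        (max (B * re i / ∑ j ∈ Finset.Icc 1 k, re j) (ρstar * re i))) :
    ∑ i ∈ Finset.Icc 1 k, p i ≤ B := by
  have hmem {i : ℕ} (hi : i ∈ Icc 1 k) : 1 ≤ i ∧ i ≤ k := mem_Icc.mp hi
  exact budget_feasibility_general hB.le
    (fun i hi ↦ (hRe i (hmem hi).1 ((hmem hi).2.trans hkn.le)).le)
    (hρ.trans_le (min_le_right _ _))
    (fun i hi ↦ (hp i (hmem hi).1 (hmem hi).2).trans_le (min_le_left _ _))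
end

section
/- (Individual rationality of honest workers) Suppose worker i ∈ S bids truthfully, b_i = c_i where c_i > 0 is his true cost, and is honest, i.e. his internal reputation satisfies re_i ≥ Re_i. Then his utility is nonnegative: p_i − c_i ≥ 0. -/
open Finset

/-!
Honesty gives `ρ * Re i ≤ ρ * re i`, so the temporary reward reaches the upper bound and an honest
winner is paid exactly `Re i * ρ`. The cost densities are nondecreasing, so the density of a winner
is at most that of worker `k + 1` and at most that of worker `k`, which is within the budget ratio;
hence it is at most `ρ`, and `Re i * ρ` covers his bid.
-/

section

variable {K : Type*} [Field K] [LinearOrder K]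

/-- The payment density threshold `ρ*` when the winners are the workers `1, …, k`. -/
def paymentThreshold (B : K) (Re b : ℕ → K) (k : ℕ) : K :=
  min (b (k + 1) / Re (k + 1)) (B / ∑ j ∈ Icc 1 k, Re j)

/-- The final payment of a winner with reputation `R` and internal reputation `r` at payment density
threshold `ρ`. His proportional share `B * re i / ∑ j, re j` of the budget enters as an arbitrary
number `share`. -/
def cappedPayment (R ρ r share : K) : K :=
  min (R * ρ) (max share (ρ * r))

theorem div_le_paymentThreshold {B : K} {Re b : ℕ → K} {k i : ℕ}
    (hsorted : MonotoneOn (fun j ↦ b j / Re j) (Set.Icc 1 (k + 1)))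
    (hbudget : b k / Re k ≤ B / ∑ j ∈ Icc 1 k, Re j) (hi : i ∈ Set.Icc 1 k) :
    b i / Re i ≤ paymentThreshold B Re b k := by
  obtain ⟨hi1, hik⟩ := hi
  have hi_mem : i ∈ Set.Icc 1 (k + 1) := ⟨hi1, by lia⟩
  have hle_next : b i / Re i ≤ b (k + 1) / Re (k + 1) :=
    hsorted hi_mem ⟨by lia, le_rfl⟩ (by lia)
  have hle_last : b i / Re i ≤ b k / Re k := hsorted hi_mem ⟨by lia, by lia⟩ hik
  exact le_min hle_next (hle_last.trans hbudget)

variable [IsStrictOrderedRing K]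

theorem cappedPayment_eq_of_le {R ρ r : K} (hρ : 0 ≤ ρ) (hRr : R ≤ r) (share : K) :
    cappedPayment R ρ r share = R * ρ := by
  refine min_eq_left (le_max_of_le_right ?_)
  calc
    R * ρ = ρ * R := mul_comm R ρ
    _ ≤ ρ * r := mul_le_mul_of_nonneg_left hRr hρ

theorem individual_rationality_honest_general {B c r : K} {Re b : ℕ → K} {k i : ℕ}
    (hRe : ∀ j ∈ Set.Icc 1 (k + 1), 0 < Re j)
    (hsorted : MonotoneOn (fun j ↦ b j / Re j) (Set.Icc 1 (k + 1)))
    (hbudget : b k / Re k ≤ B / ∑ j ∈ Icc 1 k, Re j) (hi : i ∈ Set.Icc 1 k)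
    (hb : 0 ≤ b i) (hcb : c ≤ b i) (honest : Re i ≤ r) (share : K) :
    0 ≤ cappedPayment (Re i) (paymentThreshold B Re b k) r share - c := by
  have hRe_pos : 0 < Re i := hRe i ⟨hi.1, hi.2.trans k.le_succ⟩
  have hdensity : b i / Re i ≤ paymentThreshold B Re b k :=
    div_le_paymentThreshold hsorted hbudget hi
  have hthreshold : 0 ≤ paymentThreshold B Re b k := (div_nonneg hb hRe_pos.le).trans hdensity
  rw [cappedPayment_eq_of_le hthreshold honest, sub_nonneg]
  exact hcb.trans ((div_le_iff₀' hRe_pos).mp hdensity)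

end

/-- **Individual rationality of honest workers.**  If a winning worker `i ∈ S = {1,…,k}`
bids truthfully (`b i = c`, his true cost `c > 0`) and is honest (`re i ≥ Re i`), then his
utility `p i - c` is nonnegative, where
`p i = min (Re i * ρ*) (max (B * re i / ∑_{j∈S} re j) (ρ* * re i))`. -/
theorem individual_rationality_honest
    (n k : ℕ) (hkn : k < n)
    (B : ℝ) (hB : 0 < B)
    (Re b re p : ℕ → ℝ)
    (hRe : ∀ i, 1 ≤ i → i ≤ n → 0 < Re i)
    (hb : ∀ i, 1 ≤ i → i ≤ n → 0 < b i)
    (hsorted : ∀ i j, 1 ≤ i → i ≤ j → j ≤ n → b i / Re i ≤ b j / Re j)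
    (hsel : ∀ i, 1 ≤ i → i ≤ k → b i / Re i ≤ B / ∑ j ∈ Finset.Icc 1 i, Re j)
    (hmax : ¬ (b (k + 1) / Re (k + 1) ≤ B / ∑ j ∈ Finset.Icc 1 (k + 1), Re j))
    (hre : ∀ i, 1 ≤ i → i ≤ k → 0 < re i ∧ re i ≤ 1)
    (ρstar : ℝ)
    (hρ : ρstar = min (b (k + 1) / Re (k + 1)) (B / ∑ j ∈ Finset.Icc 1 k, Re j))
    (hp : ∀ i, 1 ≤ i → i ≤ k →
      p i = min (Re i * ρstar)
        (max (B * re i / ∑ j ∈ Finset.Icc 1 k, re j) (ρstar * re i)))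
    (i : ℕ) (hi1 : 1 ≤ i) (hik : i ≤ k)
    (c : ℝ) (hc : 0 < c) (htruth : b i = c)
    (honest : Re i ≤ re i) :
    0 ≤ p i - c := by
  rw [hp i hi1 hik, hρ]
  exact individual_rationality_honest_general (fun j hj ↦ hRe j hj.1 (hj.2.trans hkn))
    (fun j hj l hl hjl ↦ hsorted j l hj.1 hjl (hl.2.trans hkn)) (hsel k (hi1.trans hik) le_rfl)
    ⟨hi1, hik⟩ (hb i hi1 (hik.trans hkn.le)).le htruth.ge honest _
end

section
/- (Underbidding yields nonpositive utility) Fix the bids of all workers other than i, and let c_i > 0 be worker i's true cost. Suppose worker i loses when bidding c_i but wins when bidding some b_i < c_i. Then under the bid b_i his payment satisfies p_i ≤ ρ*·Re_i ≤ c_i, so his utility p_i − c_i ≤ 0. -/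
open Finset

/-- The outcome of the proportional-share selection rule under bid profile `b`:
`σ` sorts the workers into nondecreasing cost-density order (`σ m` is the worker in
position `m`), and the winning set is the maximal prefix of length `k` of the sorted
order on which the selection condition holds. -/
def IsOutcome (n : ℕ) (B : ℝ) (Re b : Fin n → ℝ) (σ : Equiv.Perm (Fin n)) (k : ℕ) : Prop :=
  k ≤ n ∧
  (∀ m m' : Fin n, m ≤ m' → b (σ m) / Re (σ m) ≤ b (σ m') / Re (σ m')) ∧
  (∀ m : Fin n, (m : ℕ) < k →
    b (σ m) / Re (σ m) ≤ B / ∑ j ∈ Finset.Iic m, Re (σ j)) ∧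
  (∀ m : Fin n, (m : ℕ) = k →
    ¬ (b (σ m) / Re (σ m) ≤ B / ∑ j ∈ Finset.Iic m, Re (σ j)))

/-- The winning set of workers: the image under the sorting permutation `σ` of the first
`k` positions. -/
def winSet (n : ℕ) (σ : Equiv.Perm (Fin n)) (k : ℕ) : Finset (Fin n) :=
  (Finset.univ.filter fun m : Fin n => (m : ℕ) < k).image σ

/-- The payment density threshold `ρ* = min (b_{k+1} / Re_{k+1}) (B / ∑_{j∈S} Re j)`
(when all `n` workers win, it degenerates to `B / ∑_{j∈S} Re j`). -/
noncomputable def rhoStar (n : ℕ) (B : ℝ) (Re b : Fin n → ℝ) (σ : Equiv.Perm (Fin n))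
    (k : ℕ) : ℝ :=
  if hkn : k < n then
    min (b (σ ⟨k, hkn⟩) / Re (σ ⟨k, hkn⟩)) (B / ∑ i ∈ winSet n σ k, Re i)
  else B / ∑ i ∈ winSet n σ k, Re i

/-- The payment to a winning worker `i`:
`p i = min (Re i * ρ*) (max (B * re i / ∑_{j∈S} re j) (ρ* * re i))`. -/
noncomputable def payment (n : ℕ) (B : ℝ) (Re b re : Fin n → ℝ) (σ : Equiv.Perm (Fin n))
    (k : ℕ) (i : Fin n) : ℝ :=
  min (Re i * rhoStar n B Re b σ k)
    (max (B * re i / ∑ j ∈ winSet n σ k, re j) (rhoStar n B Re b σ k * re i))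

/-!
Let a worker of cost density `x` lose under the bids `b`. Already the first rejected position
breaks the budget condition, so the workers of density at most `x` satisfy
`B / ∑ Re j < x`. Let no loser under the bids `b'` bid more in `b'` than in `b`. Were `x < ρ*`
under `b'`, all workers whose density under `b` is at most `x` would win under `b'`, since the
losers have density at least `ρ*`; enlarging the sum to the winning set then gives
`ρ* ≤ B / ∑ Re j < x`, a contradiction.
-/

section Mechanism

variable {n : ℕ} {B : ℝ} {Re b : Fin n → ℝ} {σ : Equiv.Perm (Fin n)} {k : ℕ} {i : Fin n}

theorem mem_winSet : i ∈ winSet n σ k ↔ (σ.symm i : ℕ) < k := by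
  simp [winSet, ← Equiv.eq_symm_apply]

theorem payment_le_rhoStar_mul (B : ℝ) (Re b re : Fin n → ℝ) (σ : Equiv.Perm (Fin n)) (k : ℕ)
    (i : Fin n) : payment n B Re b re σ k i ≤ rhoStar n B Re b σ k * Re i :=
  (min_le_left _ _).trans_eq (mul_comm _ _)

theorem rhoStar_le_div_sum_winSet (B : ℝ) (Re b : Fin n → ℝ) (σ : Equiv.Perm (Fin n)) (k : ℕ) :
    rhoStar n B Re b σ k ≤ B / ∑ j ∈ winSet n σ k, Re j := by
  unfold rhoStar
  split_ifs
  · exact min_le_right _ _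
  · exact le_rfl

theorem IsOutcome.rhoStar_le_div_of_notMem_winSet (h : IsOutcome n B Re b σ k)
    (hi : i ∉ winSet n σ k) : rhoStar n B Re b σ k ≤ b i / Re i := by
  obtain ⟨-, hsorted, -, -⟩ := h
  have hki : k ≤ σ.symm i := not_lt.1 (mt mem_winSet.2 hi)
  have hk : k < n := hki.trans_lt (σ.symm i).isLt
  calc rhoStar n B Re b σ k
      ≤ b (σ ⟨k, hk⟩) / Re (σ ⟨k, hk⟩) := (dif_pos hk).trans_le (min_le_left _ _)
    _ ≤ b i / Re i := by simpa using hsorted ⟨k, hk⟩ (σ.symm i) hki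

theorem IsOutcome.div_sum_lt_div_of_notMem_winSet (hB : 0 ≤ B) (hRe : ∀ j, 0 < Re j)
    (h : IsOutcome n B Re b σ k) (hi : i ∉ winSet n σ k) :
    B / ∑ j with b j / Re j ≤ b i / Re i, Re j < b i / Re i := by
  obtain ⟨-, hsorted, -, hreject⟩ := h
  have hki : k ≤ σ.symm i := not_lt.1 (mt mem_winSet.2 hi)
  let m : Fin n := ⟨k, hki.trans_lt (σ.symm i).isLt⟩
  have hm : b (σ m) / Re (σ m) ≤ b i / Re i := by simpa using hsorted m (σ.symm i) hki
  have hprefix : (Iic m).map σ.toEmbedding ⊆ ({j | b j / Re j ≤ b i / Re i} : Finset (Fin n)) := by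
    intro j hj
    obtain ⟨l, hl, rfl⟩ := mem_map.1 hj
    exact mem_filter.2 ⟨mem_univ _, (hsorted l m (mem_Iic.1 hl)).trans hm⟩
  have hsum : ∑ l ∈ Iic m, Re (σ l) ≤ ∑ j with b j / Re j ≤ b i / Re i, Re j := by
    simpa using sum_le_sum_of_subset_of_nonneg hprefix fun j _ _ => (hRe j).le
  have hpos : 0 < ∑ l ∈ Iic m, Re (σ l) := sum_pos (fun l _ => hRe (σ l)) nonempty_Iic
  calc B / ∑ j with b j / Re j ≤ b i / Re i, Re j
      ≤ B / ∑ l ∈ Iic m, Re (σ l) := div_le_div_of_nonneg_left hB hpos hsum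
    _ < b (σ m) / Re (σ m) := not_le.1 (hreject m rfl)
    _ ≤ b i / Re i := hm

variable {b' : Fin n → ℝ} {σ' : Equiv.Perm (Fin n)} {k' : ℕ}

theorem IsOutcome.rhoStar_le_div_of_bids_le (hB : 0 ≤ B) (hRe : ∀ j, 0 < Re j)
    (h : IsOutcome n B Re b σ k) (h' : IsOutcome n B Re b' σ' k')
    (hle : ∀ j ∉ winSet n σ' k', b' j ≤ b j) (hi : i ∉ winSet n σ k) :
    rhoStar n B Re b' σ' k' ≤ b i / Re i := by
  by_contra! hlt
  have hwinners : ({j | b j / Re j ≤ b i / Re i} : Finset (Fin n)) ⊆ winSet n σ' k' := by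
    intro j hj
    by_contra hlose
    have hdensity : b' j / Re j ≤ b j / Re j :=
      div_le_div_of_nonneg_right (hle j hlose) (hRe j).le
    exact hlt.not_ge <|
      (h'.rhoStar_le_div_of_notMem_winSet hlose).trans (hdensity.trans (mem_filter.1 hj).2)
  have hpos : 0 < ∑ j with b j / Re j ≤ b i / Re i, Re j :=
    sum_pos (fun j _ => hRe j) ⟨i, by simp⟩
  have hsum : ∑ j with b j / Re j ≤ b i / Re i, Re j ≤ ∑ j ∈ winSet n σ' k', Re j :=
    sum_le_sum_of_subset_of_nonneg hwinners fun j _ _ => (hRe j).le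
  refine hlt.not_gt ?_
  calc rhoStar n B Re b' σ' k'
      ≤ B / ∑ j ∈ winSet n σ' k', Re j := rhoStar_le_div_sum_winSet B Re b' σ' k'
    _ ≤ B / ∑ j with b j / Re j ≤ b i / Re i, Re j := div_le_div_of_nonneg_left hB hpos hsum
    _ < b i / Re i := h.div_sum_lt_div_of_notMem_winSet hB hRe hi

theorem underbidding_nonpositive_utility_general (hB : 0 ≤ B) (hRe : ∀ j, 0 < Re j)
    (re : Fin n → ℝ) (h : IsOutcome n B Re b σ k) (h' : IsOutcome n B Re b' σ' k')
    (hle : ∀ j ∉ winSet n σ' k', b' j ≤ b j) (hi : i ∉ winSet n σ k) :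
    payment n B Re b' re σ' k' i ≤ rhoStar n B Re b' σ' k' * Re i ∧
    rhoStar n B Re b' σ' k' * Re i ≤ b i ∧
    payment n B Re b' re σ' k' i - b i ≤ 0 := by
  have hpay := payment_le_rhoStar_mul B Re b' re σ' k' i
  have hcost : rhoStar n B Re b' σ' k' * Re i ≤ b i :=
    (le_div_iff₀ (hRe i)).1 (h.rhoStar_le_div_of_bids_le hB hRe h' hle hi)
  exact ⟨hpay, hcost, sub_nonpos.2 (hpay.trans hcost)⟩

end Mechanism

/-- **Underbidding yields nonpositive utility.**  Fix the bids of all workers other than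
`i0` and let `c = bT i0 > 0` be worker `i0`'s true cost.  Suppose worker `i0` loses when
bidding truthfully (profile `bT`) but wins when bidding some smaller `bL i0 < bT i0`
(profile `bL`).  Then under the bid `bL i0` his payment satisfies
`p ≤ ρ* * Re i0 ≤ c`, so his utility `p - c` is nonpositive. -/
theorem underbidding_nonpositive_utility
    (n : ℕ) (B : ℝ) (hB : 0 < B)
    (Re : Fin n → ℝ) (hRe : ∀ i, 0 < Re i)
    (bT bL re : Fin n → ℝ) (hbT : ∀ i, 0 < bT i) (hbL : ∀ i, 0 < bL i)
    (hre : ∀ i, 0 < re i ∧ re i ≤ 1)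
    (i0 : Fin n) (hunder : bL i0 < bT i0) (hother : ∀ j, j ≠ i0 → bL j = bT j)
    (σT σL : Equiv.Perm (Fin n)) (kT kL : ℕ)
    (hOT : IsOutcome n B Re bT σT kT) (hOL : IsOutcome n B Re bL σL kL)
    (hlose : i0 ∉ winSet n σT kT) (hwin : i0 ∈ winSet n σL kL) :
    payment n B Re bL re σL kL i0 ≤ rhoStar n B Re bL σL kL * Re i0 ∧
    rhoStar n B Re bL σL kL * Re i0 ≤ bT i0 ∧
    payment n B Re bL re σL kL i0 - bT i0 ≤ 0 :=
  underbidding_nonpositive_utility_general hB.le hRe re hOT hOL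
    (fun j hj => (hother j (ne_of_mem_of_not_mem hwin hj).symm).le) hlose
end

section
/- The function q(x) = x·h(x), where h(x) = 1 − (19/(10π))·arctan(10x/π), is strictly increasing on the interval [0,1]. -/
open Real

/-- The influence function `h(x) = 1 - (19/(10π))·arctan(10x/π)` of the latest internal
reputation on the attenuation coefficient. -/
noncomputable def h (x : ℝ) : ℝ := -(19 / (10 * π)) * arctan (10 * x / π) + 1

/-- `q(x) = h(x)·x`. -/
noncomputable def q (x : ℝ) : ℝ := x * h x

/-!
Put `θ = arctan (b * x)`. The derivative of `x * (1 - a * arctan (b * x))` is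
`1 - a * (θ + sin (2 * θ) / 2)`, and `sin (2 * θ) = sin (π - 2 * θ) < π - 2 * θ` bounds the bracket,
an odd function of `θ`, by `π / 2` in absolute value. So the derivative is positive whenever
`|a| ≤ 2 / π`, and for `q` the coefficient `19 / (10 * π)` lies just below that threshold.
-/

theorem sin_two_mul_arctan (t : ℝ) : sin (2 * arctan t) = 2 * t / (1 + t ^ 2) := by
  rw [sin_eq_two_mul_tan_half_div_one_add_tan_half_sq, mul_div_cancel_left₀ _ two_ne_zero,
    tan_arctan]

theorem arctan_add_div_one_add_sq_lt_pi_div_two (t : ℝ) :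
    arctan t + t / (1 + t ^ 2) < π / 2 := by
  have hsin : sin (π - 2 * arctan t) < π - 2 * arctan t :=
    sin_lt (by linarith [arctan_lt_pi_div_two t])
  rw [sin_pi_sub, sin_two_mul_arctan, mul_div_assoc] at hsin
  linarith

theorem abs_arctan_add_div_one_add_sq_lt_pi_div_two (t : ℝ) :
    |arctan t + t / (1 + t ^ 2)| < π / 2 := by
  have hneg := arctan_add_div_one_add_sq_lt_pi_div_two (-t)
  rw [arctan_neg, neg_sq, neg_div, ← neg_add] at hneg
  exact abs_lt.2 ⟨neg_lt.1 hneg, arctan_add_div_one_add_sq_lt_pi_div_two t⟩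

theorem hasDerivAt_mul_one_sub_mul_arctan (a b x : ℝ) :
    HasDerivAt (fun y ↦ y * (1 - a * arctan (b * y)))
      (1 - a * (arctan (b * x) + b * x / (1 + (b * x) ^ 2))) x := by
  have harctan : HasDerivAt (fun y ↦ arctan (b * y)) (1 / (1 + (b * x) ^ 2) * (b * 1)) x :=
    ((hasDerivAt_id' x).const_mul b).arctan
  refine ((hasDerivAt_id' x).fun_mul ((harctan.const_mul a).const_sub 1)).congr_deriv ?_
  ring

theorem strictMono_mul_one_sub_mul_arctan {a : ℝ} (ha : |a| ≤ 2 / π) (b : ℝ) :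
    StrictMono fun x ↦ x * (1 - a * arctan (b * x)) := by
  refine strictMono_of_hasDerivAt_pos (hasDerivAt_mul_one_sub_mul_arctan a b) fun x ↦ ?_
  set s := arctan (b * x) + b * x / (1 + (b * x) ^ 2)
  have hs : |s| < π / 2 := abs_arctan_add_div_one_add_sq_lt_pi_div_two (b * x)
  have has : a * s < 1 :=
    calc a * s ≤ |a| * |s| := (le_abs_self _).trans_eq (abs_mul a s)
      _ ≤ 2 / π * |s| := by gcongr
      _ < 2 / π * (π / 2) := by gcongr
      _ = 1 := by field_simp
  exact sub_pos.2 has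

theorem q_eq_mul_one_sub_mul_arctan (x : ℝ) :
    q x = x * (1 - 19 / (10 * π) * arctan (10 / π * x)) := by
  rw [q, h, mul_div_right_comm, neg_mul, neg_add_eq_sub]

theorem q_strictMonoOn_general : StrictMono q := by
  have hcoeff : |19 / (10 * π)| ≤ 2 / π := by
    rw [abs_of_pos (by positivity), div_le_div_iff₀ (by positivity) pi_pos]
    linarith [pi_pos]
  rw [funext q_eq_mul_one_sub_mul_arctan]
  exact strictMono_mul_one_sub_mul_arctan hcoeff (10 / π)

/-- **`q` is strictly increasing on `[0,1]`.**  The function `q(x) = x·h(x)`, where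
`h(x) = 1 - (19/(10π))·arctan(10x/π)`, is strictly increasing on the interval `[0,1]`. -/
theorem q_strictMonoOn : StrictMonoOn q (Set.Icc 0 1) :=
  q_strictMonoOn_general.strictMonoOn _
end
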